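/- Let R be a nonempty proper subset of M ⊆ V (for instance one block of a partition of M into A, B, C), and let L ⊆ M∖R be nonempty. If there exists v ∈ L such that X_R ⟂ X_v | X_{(M∖R)∖{v}}, then λ_L^M(x_L) = λ_L^{M∖R}(x_L) for all x_L ∈ 𝔛_L, i.e., the table 𝔛_M is collapsible over R into 𝔛_{M∖R} with respect to λ_L^M. -/

import Mathlib

open Finset

variable {V : Type*} [Fintype V] [DecidableEq V]
variable {𝔛 : V → Type*} [∀ v, Fintype (𝔛 v)] [∀ v, DecidableEq (𝔛 v)]
  [∀ v, Nonempty (𝔛 v)]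

/-- The marginal `p_A` of a distribution `p` on the full table, evaluated at the
`A`-coordinates of `x`. -/
noncomputable def margin (p : (∀ v, 𝔛 v) → ℝ) (A : Finset V) (x : ∀ v, 𝔛 v) : ℝ :=
  ∑ y ∈ Finset.univ.filter (fun y : ∀ v, 𝔛 v => ∀ v ∈ A, y v = x v), p y

/-- `ν_L^M(x_L) = (1/|𝔛_{M∖L}|) Σ_{j ∈ 𝔛_M : j_L = x_L} log p_M(j)`, written with sums over
full configurations (for `L ⊆ M` the extra coordinates cancel against the normalization). -/
noncomputable def nu (p : (∀ v, 𝔛 v) → ℝ) (L M : Finset V) (x : ∀ v, 𝔛 v) : ℝ :=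
  (∏ v ∈ Lᶜ, (Fintype.card (𝔛 v) : ℝ))⁻¹ *
    ∑ j ∈ Finset.univ.filter (fun j : ∀ v, 𝔛 v => ∀ v ∈ L, j v = x v),
      Real.log (margin p M j)

/-- The marginal log-linear parameter `λ_L^M(x_L) = Σ_{L' ⊆ L} (−1)^{|L∖L'|} ν_{L'}^M(x_{L'})`. -/
noncomputable def mll (p : (∀ v, 𝔛 v) → ℝ) (L M : Finset V) (x : ∀ v, 𝔛 v) : ℝ :=
  ∑ L' ∈ L.powerset, (-1 : ℝ) ^ ((L \ L').card) * nu p L' M x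

/-- `X_A ⟂ X_B | X_C`: `p_{A∪B∪C}·p_C = p_{A∪C}·p_{B∪C}` pointwise. -/
def CondIndep (p : (∀ v, 𝔛 v) → ℝ) (A B C : Finset V) : Prop :=
  ∀ x : ∀ v, 𝔛 v,
    margin p (A ∪ B ∪ C) x * margin p C x = margin p (A ∪ C) x * margin p (B ∪ C) x

/-!
If `X_A ⟂ X_B | X_C`, then `log p_{A∪B∪C} - log p_{B∪C} = log p_{A∪C} - log p_C` is a function of
`x_{A∪C}` only. The parameter `λ_L` is a linear functional of the log-margin that averages out the
coordinates outside each `L' ⊆ L` and takes an alternating sum over `L'`. On a function that does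
not depend on some `v ∈ L`, the averages over `L'` and `L' ∪ {v}` agree, so the sum cancels in
pairs.
-/

section Powerset

variable {α R : Type*} [DecidableEq α] [Ring R]

theorem sum_powerset_neg_one_pow_card_sdiff_mul_eq_zero {s : Finset α} {a : α} (ha : a ∈ s)
    {F : Finset α → R} (hF : ∀ t, a ∉ t → F (insert a t) = F t) :
    ∑ t ∈ s.powerset, (-1) ^ #(s \ t) * F t = 0 := by
  obtain ⟨s, has, rfl⟩ : ∃ u, a ∉ u ∧ insert a u = s :=
    ⟨s.erase a, notMem_erase a s, insert_erase ha⟩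
  rw [sum_powerset_insert has, ← sum_add_distrib]
  refine sum_eq_zero fun t ht => ?_
  have hat : a ∉ t := fun h => has (mem_powerset.1 ht h)
  have hcard : #(insert a s \ t) = #(s \ t) + 1 := by
    rw [insert_sdiff_of_notMem s hat, card_insert_of_notMem (by simp [has])]
  have hsdiff : insert a s \ insert a t = s \ t := by
    rw [insert_sdiff_insert, sdiff_insert_of_notMem has]
  rw [hcard, hsdiff, hF t hat, pow_succ, mul_neg_one, neg_mul, neg_add_cancel]

end Powerset

section Cylinder

omit [∀ v, Nonempty (𝔛 v)]

/-- The configurations that agree with `x` on `L`; the index set of the sums in `margin` and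
`nu`. -/
def cylinder (L : Finset V) (x : ∀ v, 𝔛 v) : Finset (∀ v, 𝔛 v) :=
  {y | ∀ v ∈ L, y v = x v}

theorem mem_cylinder {L : Finset V} {x y : ∀ v, 𝔛 v} :
    y ∈ cylinder L x ↔ ∀ v ∈ L, y v = x v := by
  simp [cylinder]

theorem dependsOn_cylinder (L : Finset V) :
    DependsOn (cylinder L : (∀ v, 𝔛 v) → Finset (∀ v, 𝔛 v)) (L : Set V) := by
  intro x y hxy
  ext z
  simp only [mem_cylinder]
  exact forall₂_congr fun v hv => by rw [hxy v hv]

theorem sum_cylinder_eq_card_mul_sum_cylinder_insert {R : Type*} [NonAssocSemiring R]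
    {f : (∀ v, 𝔛 v) → R} {v : V} (hf : DependsOn f ({v}ᶜ : Set V)) {L : Finset V} (hv : v ∉ L)
    (x : ∀ v, 𝔛 v) :
    ∑ j ∈ cylinder L x, f j = Fintype.card (𝔛 v) * ∑ j ∈ cylinder (insert v L) x, f j := by
  have hupdate (j : ∀ v, 𝔛 v) (a : 𝔛 v) : f (Function.update j v a) = f j :=
    hf fun w hw => Function.update_of_ne hw _ _
  calc ∑ j ∈ cylinder L x, f j
      = ∑ i ∈ (univ : Finset (𝔛 v)) ×ˢ cylinder (insert v L) x, f i.2 := by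
        refine sum_nbij' (fun j => (j v, Function.update j v (x v)))
          (fun i => Function.update i.2 v i.1) (fun j hj => ?_) (fun i hi => ?_) (fun j _ => ?_)
          (fun i hi => ?_) (fun j _ => (hupdate j (x v)).symm)
        · grind [mem_cylinder]
        · grind [mem_cylinder]
        · rw [Function.update_idem, Function.update_eq_self]
        · have hiv : i.2 v = x v := mem_cylinder.1 (mem_product.1 hi).2 v (mem_insert_self v L)
          rw [Function.update_self, Function.update_idem, ← hiv, Function.update_eq_self]
    _ = Fintype.card (𝔛 v) * ∑ j ∈ cylinder (insert v L) x, f j := by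
        rw [sum_product]
        simp only [sum_const, card_univ, nsmul_eq_mul]

end Cylinder

section Interaction

variable {K : Type*} [Field K]

/-- The mean of `f` over the configurations that agree with `x` on `L`. The normalization is the
one of `nu`, so that `nu p L M` is by definition the mean of the logarithm of the `M`-margin. -/
def cylinderMean (f : (∀ v, 𝔛 v) → K) (L : Finset V) (x : ∀ v, 𝔛 v) : K :=
  (∏ v ∈ Lᶜ, (Fintype.card (𝔛 v) : K))⁻¹ * ∑ j ∈ cylinder L x, f j

/-- The `L`-interaction of `f` under the zero-sum (effect) coding: the Möbius inversion over the
subsets of `L` of the means of `f`. The parameter `mll p L M` is the `L`-interaction of the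
logarithm of the `M`-margin. -/
def interaction (f : (∀ v, 𝔛 v) → K) (L : Finset V) (x : ∀ v, 𝔛 v) : K :=
  ∑ L' ∈ L.powerset, (-1) ^ #(L \ L') * cylinderMean f L' x

omit [∀ v, Nonempty (𝔛 v)] in
theorem interaction_sub (f g : (∀ v, 𝔛 v) → K) (L : Finset V) (x : ∀ v, 𝔛 v) :
    interaction (f - g) L x = interaction f L x - interaction g L x := by
  simp only [interaction, cylinderMean, Pi.sub_apply, sum_sub_distrib, mul_sub]

theorem cylinderMean_insert [CharZero K] {f : (∀ v, 𝔛 v) → K} {v : V}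
    (hf : DependsOn f ({v}ᶜ : Set V)) {L : Finset V} (hv : v ∉ L) (x : ∀ v, 𝔛 v) :
    cylinderMean f (insert v L) x = cylinderMean f L x := by
  have hcard : (Fintype.card (𝔛 v) : K) ≠ 0 := Nat.cast_ne_zero.2 Fintype.card_ne_zero
  have hcompl : Lᶜ = insert v (insert v L)ᶜ := by
    rw [compl_insert, insert_erase (mem_compl.2 hv)]
  rw [cylinderMean, cylinderMean, sum_cylinder_eq_card_mul_sum_cylinder_insert hf hv, hcompl,
    prod_insert (by simp), mul_inv_rev, mul_assoc, inv_mul_cancel_left₀ hcard]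

theorem interaction_eq_zero_of_dependsOn [CharZero K] {f : (∀ v, 𝔛 v) → K} {s : Set V}
    (hf : DependsOn f s) {L : Finset V} (hL : ¬ (L : Set V) ⊆ s) (x : ∀ v, 𝔛 v) :
    interaction f L x = 0 := by
  obtain ⟨v, hvL, hvs⟩ := Set.not_subset.1 hL
  exact sum_powerset_neg_one_pow_card_sdiff_mul_eq_zero hvL fun _ hv =>
    cylinderMean_insert (hf.mono (Set.subset_compl_singleton_iff.2 hvs)) hv x

end Interaction

section Margin

omit [∀ v, Nonempty (𝔛 v)]

theorem mll_eq_interaction (p : (∀ v, 𝔛 v) → ℝ) (L M : Finset V) (x : ∀ v, 𝔛 v) :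
    mll p L M x = interaction (fun j => Real.log (margin p M j)) L x :=
  rfl

theorem dependsOn_margin (p : (∀ v, 𝔛 v) → ℝ) (A : Finset V) :
    DependsOn (margin p A) (A : Set V) :=
  fun _ _ h => congrArg (fun s => ∑ y ∈ s, p y) (dependsOn_cylinder A h)

theorem margin_pos {p : (∀ v, 𝔛 v) → ℝ} (hp : ∀ x, 0 < p x) (A : Finset V) (x : ∀ v, 𝔛 v) :
    0 < margin p A x :=
  sum_pos (fun y _ => hp y) ⟨x, mem_cylinder.2 fun _ _ => rfl⟩

theorem CondIndep.log_margin_sub_log_margin {p : (∀ v, 𝔛 v) → ℝ} {A B C : Finset V}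
    (h : CondIndep p A B C) (hp : ∀ x, 0 < p x) (x : ∀ v, 𝔛 v) :
    Real.log (margin p (A ∪ B ∪ C) x) - Real.log (margin p (B ∪ C) x) =
      Real.log (margin p (A ∪ C) x) - Real.log (margin p C x) := by
  have hne (D : Finset V) : margin p D x ≠ 0 := (margin_pos hp D x).ne'
  rw [sub_eq_sub_iff_add_eq_add, ← Real.log_mul (hne _) (hne _), ← Real.log_mul (hne _) (hne _),
    h x]

theorem CondIndep.dependsOn_log_margin_sub_log_margin {p : (∀ v, 𝔛 v) → ℝ} {A B C : Finset V}
    (h : CondIndep p A B C) (hp : ∀ x, 0 < p x) :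
    DependsOn ((fun j => Real.log (margin p (A ∪ B ∪ C) j)) -
      fun j => Real.log (margin p (B ∪ C) j)) (A ∪ C : Set V) := by
  intro x y hxy
  have hAC : margin p (A ∪ C) x = margin p (A ∪ C) y :=
    dependsOn_margin p _ fun v hv => hxy v (by simpa using hv)
  have hC : margin p C x = margin p C y := dependsOn_margin p _ fun v hv => hxy v (.inr hv)
  simp only [Pi.sub_apply, h.log_margin_sub_log_margin hp, hAC, hC]

end Margin

theorem stmt18_general {p : (∀ v, 𝔛 v) → ℝ} (hp : ∀ x, 0 < p x) {A B C L : Finset V}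
    (h : CondIndep p A B C) (hL : ¬ L ⊆ A ∪ C) (x : ∀ v, 𝔛 v) :
    mll p L (A ∪ B ∪ C) x = mll p L (B ∪ C) x := by
  rw [← sub_eq_zero, mll_eq_interaction, mll_eq_interaction, ← interaction_sub]
  exact interaction_eq_zero_of_dependsOn (h.dependsOn_log_margin_sub_log_margin hp)
    (by exact_mod_cast hL) x

theorem stmt18 (p : (∀ v, 𝔛 v) → ℝ) (hp : ∀ x, 0 < p x) (hsum : ∑ x, p x = 1)
    (hcard : ∀ v : V, 2 ≤ Fintype.card (𝔛 v))
    (R M L : Finset V) (hR : R.Nonempty) (hRM : R ⊂ M)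
    (hL : L.Nonempty) (hLMR : L ⊆ M \ R)
    (hex : ∃ v ∈ L, CondIndep p R {v} ((M \ R) \ {v})) :
    ∀ x : ∀ v, 𝔛 v, mll p L M x = mll p L (M \ R) x := by
  obtain ⟨v, hvL, hindep⟩ := hex
  have hvMR : v ∈ M \ R := hLMR hvL
  have hMR : {v} ∪ (M \ R) \ {v} = M \ R :=
    union_sdiff_of_subset (singleton_subset_iff.2 hvMR)
  have hM : R ∪ {v} ∪ (M \ R) \ {v} = M := by
    rw [union_assoc, hMR, union_sdiff_of_subset hRM.subset]
  have hLnot : ¬ L ⊆ R ∪ (M \ R) \ {v} := not_subset.2 ⟨v, hvL, by grind⟩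
  simpa only [hM, hMR] using stmt18_general hp hindep hLnot
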